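/- arXiv:2509.02874 — 2 statements merged into one kernel-verified Lean document; each statement's English description precedes it below -/
import Mathlib

section
/- Let n ≥ 1, let α be real with 0 < α < 1/2, and let 1 ≤ i ≤ j ≤ n. Then the (i,j) entry of (I − α·A_{P_n})^{-1} equals α^{j−i}·d_{i−1}(α)·d_{n−j}(α)/d_n(α). In particular, for i < j the Katz similarity index satisfies K_{P_n}(α)_{i,j} = α^{j−i}·d_{i−1}(α)·d_{n−j}(α)/d_n(α). -/
/-- `dpoly n α = ∑_{m=0}^{⌊n/2⌋} (-1)^m C(n-m, m) α^(2m)`. -/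
noncomputable def dpoly (n : ℕ) (α : ℝ) : ℝ :=
  ∑ m ∈ Finset.range (n / 2 + 1), (-1 : ℝ) ^ m * (Nat.choose (n - m) m : ℝ) * α ^ (2 * m)

/-- Adjacency matrix of the path graph on `n` vertices. -/
def pathAdj (n : ℕ) : Matrix (Fin n) (Fin n) ℝ :=
  fun i j => if i.val + 1 = j.val ∨ j.val + 1 = i.val then 1 else 0

theorem dpoly_ext (n N : ℕ) (α : ℝ) (h : n / 2 + 1 ≤ N) :
    dpoly n α = ∑ m ∈ Finset.range N, (-1 : ℝ) ^ m * (Nat.choose (n - m) m : ℝ) * α ^ (2 * m) := by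
  unfold dpoly
  apply Finset.sum_subset
  · intro x hx
    simp only [Finset.mem_range] at *
    omega
  · intro x _ hx
    simp only [Finset.mem_range] at hx
    rw [Nat.choose_eq_zero_of_lt (by omega)]
    simp

theorem dpoly_rec (n : ℕ) (α : ℝ) :
    dpoly (n + 2) α = dpoly (n + 1) α - α ^ 2 * dpoly n α := by
  rw [dpoly_ext (n + 2) (n + 2) α (by omega), dpoly_ext (n + 1) (n + 2) α (by omega),
    dpoly_ext n (n + 1) α (by omega), Finset.sum_range_succ' _ (n + 1),
    Finset.sum_range_succ' _ (n + 1), Finset.mul_sum, add_sub_right_comm,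
    ← Finset.sum_sub_distrib]
  congr 1
  · apply Finset.sum_congr rfl
    intro m hm
    simp only [Finset.mem_range] at hm
    have h1 : n + 2 - (m + 1) = (n - m) + 1 := by omega
    have h2 : n + 1 - (m + 1) = n - m := by omega
    rw [h1, h2, Nat.choose_succ_succ]
    push_cast
    ring

/-- Shifted `dpoly`, with value `0` at `0`. -/
noncomputable def epoly (α : ℝ) : ℕ → ℝ
  | 0 => 0
  | k + 1 => dpoly k α

theorem epoly_rec (k : ℕ) (α : ℝ) :
    epoly α (k + 2) = epoly α (k + 1) - α ^ 2 * epoly α k := by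
  cases k with
  | zero => simp [epoly, dpoly]
  | succ k => exact dpoly_rec k α

theorem epoly_add (s i : ℕ) (α : ℝ) :
    epoly α (i + s + 2) = epoly α (i + 1) * epoly α (s + 1) - α ^ 2 * epoly α i * epoly α (s + 1)
      - α ^ 2 * epoly α (i + 1) * epoly α s := by
  have h1 : epoly α 1 = 1 := by simp [epoly, dpoly]
  induction s generalizing i with
  | zero =>
    have h0 : epoly α 0 = 0 := rfl
    simp only [zero_add, add_zero, h0, h1, epoly_rec]
    ring
  | succ s ih =>
    have := ih (i + 1)
    rw [show i + (s + 1) + 2 = i + 1 + s + 2 by ring, this, show i + 1 + 1 = i + 2 by ring,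
      epoly_rec i, show s + 1 + 1 = s + 2 by ring, epoly_rec s]
    ring

theorem dpoly_pos (n : ℕ) (α : ℝ) (h0 : 0 < α) (h1 : α < 1 / 2) :
    0 < dpoly n α ∧ dpoly n α ≤ 2 * dpoly (n + 1) α := by
  induction n with
  | zero => simp [dpoly]
  | succ n ih =>
    obtain ⟨ha, hb⟩ := ih
    have : 0 < dpoly (n + 1) α := by linarith
    refine ⟨this, ?_⟩
    rw [dpoly_rec]
    have h2 : α ^ 2 ≤ 1 / 4 := by nlinarith
    nlinarith [mul_le_mul h2 hb ha.le (by norm_num)]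

/-- Unnormalized Green function (1-based indices, with zero boundary values). -/
noncomputable def green (n : ℕ) (α : ℝ) (i j : ℕ) : ℝ :=
  if i ≤ j then α ^ (j - i) * epoly α i * epoly α (n + 1 - j)
  else α ^ (i - j) * epoly α j * epoly α (n + 1 - i)

theorem green_rec (n : ℕ) (α : ℝ) (i j : ℕ) (hi : i < n) (hj : j ≤ n) :
    green n α (i + 1) j - α * (green n α i j + green n α (i + 2) j)
      = if i + 1 = j then epoly α (n + 1) else 0 := by
  unfold green
  obtain ⟨s, rfl⟩ : ∃ s, n = i + 1 + s := ⟨n - (i + 1), by omega⟩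
  rcases lt_trichotomy (i + 1) j with h | h | h
  · obtain ⟨t, rfl⟩ : ∃ t, j = i + 2 + t := ⟨j - (i + 2), by omega⟩
    rw [if_pos (by omega), if_pos (by omega), if_pos (by omega), if_neg (by omega),
      show i + 2 + t - (i + 1) = t + 1 by omega, show i + 2 + t - i = t + 2 by omega,
      show i + 2 + t - (i + 2) = t by omega, epoly_rec i]
    ring
  · subst h
    rw [if_pos (by omega), if_pos (by omega), if_neg (by omega), if_pos rfl,
      show i + 1 - (i + 1) = 0 by omega, show i + 1 - i = 1 by omega,
      show i + 2 - (i + 1) = 1 by omega, show i + 1 + s + 1 - (i + 1) = s + 1 by omega,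
      show i + 1 + s + 1 - (i + 2) = s by omega, show i + 1 + s + 1 = i + s + 2 by omega,
      epoly_add]
    ring
  · obtain ⟨t, rfl⟩ : ∃ t, i = j + t := ⟨i - j, by omega⟩
    have hmid : (if j + t ≤ j then α ^ (j - (j + t)) * epoly α (j + t) *
        epoly α (j + t + 1 + s + 1 - j)
        else α ^ (j + t - j) * epoly α j * epoly α (j + t + 1 + s + 1 - (j + t)))
        = α ^ t * epoly α j * epoly α (s + 2) := by
      rw [show j + t + 1 + s + 1 - (j + t) = s + 2 by omega]
      split_ifs with h'
      · obtain rfl : t = 0 := by omega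
        rw [show j + 0 + 1 + s + 1 - j = s + 2 by omega]
        simp
      · rw [show j + t - j = t by omega]
    rw [hmid, if_neg (by omega), if_neg (by omega), if_neg (by omega),
      show j + t + 1 - j = t + 1 by omega, show j + t + 2 - j = t + 2 by omega,
      show j + t + 1 + s + 1 - (j + t + 1) = s + 1 by omega,
      show j + t + 1 + s + 1 - (j + t + 2) = s by omega, epoly_rec s]
    ring

theorem row_sum (n i : ℕ) (hi : i < n) (f : ℕ → ℝ) (h0 : f 0 = 0) (h1 : f (n + 1) = 0) :
    ∑ k : Fin n, (if i + 1 = k.val ∨ k.val + 1 = i then (1 : ℝ) else 0) * f (k.val + 1)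
      = f i + f (i + 2) := by
  rw [Fin.sum_univ_eq_sum_range
    (fun k => (if i + 1 = k ∨ k + 1 = i then (1 : ℝ) else 0) * f (k + 1)) n]
  have h2 : ∀ k ∈ Finset.range n, (if i + 1 = k ∨ k + 1 = i then (1 : ℝ) else 0) * f (k + 1)
      = (if k + 1 = i then f (k + 1) else 0) + (if i + 1 = k then f (k + 1) else 0) := by
    intro k _
    by_cases ha : i + 1 = k
    · rw [if_pos (Or.inl ha), if_neg (by omega), if_pos ha]
      ring
    · by_cases hb : k + 1 = i
      · rw [if_pos (Or.inr hb), if_pos hb, if_neg ha]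
        ring
      · simp [ha, hb]
  rw [Finset.sum_congr rfl h2, Finset.sum_add_distrib]
  congr 1
  · cases i with
    | zero => simp [h0]
    | succ i =>
      simp only [Nat.add_right_cancel_iff]
      rw [Finset.sum_ite_eq', if_pos (Finset.mem_range.2 (by omega))]
  · rw [Finset.sum_ite_eq]
    split_ifs with h
    · rfl
    · simp only [Finset.mem_range] at h
      obtain rfl : n = i + 1 := by omega
      exact h1.symm

theorem inv_eq (n : ℕ) (α : ℝ) (h0 : 0 < α) (h1 : α < 1 / 2) :
    ((1 : Matrix (Fin n) (Fin n) ℝ) - α • pathAdj n)⁻¹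
      = Matrix.of fun i j => green n α (i.val + 1) (j.val + 1) / dpoly n α := by
  apply Matrix.inv_eq_right_inv
  have hd : dpoly n α ≠ 0 := (dpoly_pos n α h0 h1).1.ne'
  rw [sub_mul, one_mul, smul_mul_assoc]
  ext i j
  have hs := row_sum n i.val i.isLt (fun k => green n α k (j.val + 1) / dpoly n α)
    (by simp [green, epoly]) (by
      have := j.isLt
      simp [green, epoly])
  have hg := green_rec n α i.val (j.val + 1) i.isLt j.isLt
  have hm : (pathAdj n * (Matrix.of fun i j => green n α (i.val + 1) (j.val + 1) / dpoly n α :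
      Matrix (Fin n) (Fin n) ℝ)) i j = green n α i.val (j.val + 1) / dpoly n α
        + green n α (i.val + 2) (j.val + 1) / dpoly n α := by
    rw [Matrix.mul_apply]
    exact hs
  rw [Matrix.sub_apply, Matrix.smul_apply, hm, Matrix.one_apply, smul_eq_mul, Matrix.of_apply]
  have he : (if i = j then (1 : ℝ) else 0)
      = (if i.val + 1 = j.val + 1 then epoly α (n + 1) else 0) / dpoly n α := by
    by_cases h : i = j
    · subst h
      simp [epoly, hd]
    · have : i.val ≠ j.val := fun h' => h (Fin.ext h')
      simp [h, this]
  rw [he, ← hg]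
  ring

theorem stmt2 (n : ℕ) (hn : 1 ≤ n) (α : ℝ) (hα0 : 0 < α) (hα1 : α < 1 / 2)
    (i j : ℕ) (hi : 1 ≤ i) (hij : i ≤ j) (hj : j ≤ n) :
    (((1 : Matrix (Fin n) (Fin n) ℝ) - α • pathAdj n)⁻¹) ⟨i - 1, by omega⟩ ⟨j - 1, by omega⟩
        = α ^ (j - i) * dpoly (i - 1) α * dpoly (n - j) α / dpoly n α ∧
      (i < j →
        (((1 : Matrix (Fin n) (Fin n) ℝ) - α • pathAdj n)⁻¹ - 1)
            ⟨i - 1, by omega⟩ ⟨j - 1, by omega⟩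
          = α ^ (j - i) * dpoly (i - 1) α * dpoly (n - j) α / dpoly n α) := by
  have key : (((1 : Matrix (Fin n) (Fin n) ℝ) - α • pathAdj n)⁻¹)
      ⟨i - 1, by omega⟩ ⟨j - 1, by omega⟩
        = α ^ (j - i) * dpoly (i - 1) α * dpoly (n - j) α / dpoly n α := by
    rw [inv_eq n α hα0 hα1]
    obtain ⟨i, rfl⟩ : ∃ k, i = k + 1 := ⟨i - 1, by omega⟩
    obtain ⟨j, rfl⟩ : ∃ k, j = k + 1 := ⟨j - 1, by omega⟩
    simp only [Nat.add_sub_cancel, green, Matrix.of_apply]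
    rw [if_pos hij, show n + 1 - (j + 1) = (n - (j + 1)) + 1 by omega]
    rfl
  refine ⟨key, fun h => ?_⟩
  rw [Matrix.sub_apply, key, Matrix.one_apply_ne, sub_zero]
  intro h'
  have := congrArg Fin.val h'
  simp only at this
  omega
end

section
/- Let n ≥ 2 and let α be real with 0 < α < 1/√5. Then for all pairs 1 ≤ i < j ≤ n and 1 ≤ i' < j' ≤ n with j − i > j' − i', one has K_{P_n}(α)_{i,j} < K_{P_n}(α)_{i',j'}. (Since both the graph distance and the effective resistance between vertices i < j of a path equal j − i, this says that for α < 1/√5 the Katz similarity index ranks all node pairs of the path in the order opposite to distance and resistance distance.) -/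
/-- Continuant-type sequence: `E 0 = 0`, `E 1 = 1`, `E (k+2) = E (k+1) - c * E k`. -/
def katzE (c : ℝ) : ℕ → ℝ
  | 0 => 0
  | 1 => 1
  | (k + 2) => katzE c (k + 1) - c * katzE c k

theorem katzE_rec (c : ℝ) (k : ℕ) : katzE c (k + 2) = katzE c (k + 1) - c * katzE c k := rfl

theorem katzE_add (c : ℝ) (a b : ℕ) :
    katzE c (a + b + 1) = katzE c (a + 1) * katzE c (b + 1) - c * (katzE c a * katzE c b) := by
  induction a generalizing b with
  | zero => simp [katzE]
  | succ a ih =>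
    have h := ih (b + 1)
    rw [show a + 1 + b + 1 = a + (b + 1) + 1 by ring, h, katzE_rec c b, katzE_rec c a]
    ring

theorem katzE_growth (c r : ℝ) (hr : 0 < r) (hc : r * (1 - r) = c) (hc0 : 0 < c) (k : ℕ) :
    0 ≤ katzE c k ∧ 0 < katzE c (k + 1) ∧ r * katzE c k ≤ katzE c (k + 1) := by
  induction k with
  | zero => simp [katzE]
  | succ k ih =>
    obtain ⟨h0, h1, h2⟩ := ih
    have hr1 : 0 < 1 - r := by
      by_contra h
      nlinarith
    have h3 : r * katzE c (k + 1) ≤ katzE c (k + 1 + 1) := by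
      rw [katzE_rec]
      have h4 := mul_le_mul_of_nonneg_left h2 hr1.le
      have h5 : c * katzE c k = (1 - r) * (r * katzE c k) := by rw [← hc]; ring
      linarith
    exact ⟨h1.le, lt_of_lt_of_le (mul_pos hr h1) h3, h3⟩

/-- Unnormalised Green function, in 1-based indices. -/
noncomputable def katzF (α : ℝ) (n j k : ℕ) : ℝ :=
  if k ≤ j then α ^ (j - k) * (katzE (α ^ 2) k * katzE (α ^ 2) (n + 1 - j))
  else α ^ (k - j) * (katzE (α ^ 2) j * katzE (α ^ 2) (n + 1 - k))

theorem katzF_rec (α : ℝ) (n j k : ℕ) (hj1 : j + 1 ≤ n) (hk : k + 1 ≤ n) :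
    katzF α n (j + 1) (k + 1) - α * (katzF α n (j + 1) k + katzF α n (j + 1) (k + 2))
      = if k = j then katzE (α ^ 2) (n + 1) else 0 := by
  rcases lt_trichotomy k j with h | h | h
  · obtain ⟨d, rfl⟩ := Nat.exists_eq_add_of_lt h
    rw [if_neg (by omega)]
    unfold katzF
    rw [if_pos (by omega), if_pos (by omega), if_pos (by omega), katzE_rec,
      show k + d + 1 + 1 - (k + 1) = d + 1 by omega, show k + d + 1 + 1 - k = d + 2 by omega,
      show k + d + 1 + 1 - (k + 2) = d by omega]
    ring
  · subst h
    obtain ⟨m, rfl⟩ := Nat.exists_eq_add_of_le hk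
    have := katzE_add (α ^ 2) (k + 1) m
    rw [if_pos rfl, this]
    unfold katzF
    rw [if_pos (by omega), if_pos (by omega), if_neg (by omega), katzE_rec,
      show k + 1 - (k + 1) = 0 by omega, show k + 1 - k = 1 by omega,
      show k + 2 - (k + 1) = 1 by omega, show k + 1 + m + 1 - (k + 1) = m + 1 by omega,
      show k + 1 + m + 1 - (k + 2) = m by omega]
    ring
  · obtain ⟨d, rfl⟩ := Nat.exists_eq_add_of_lt h
    obtain ⟨m, rfl⟩ := Nat.exists_eq_add_of_le hk
    rw [if_neg (by omega)]
    unfold katzF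
    rw [if_neg (by omega),
      show j + d + 1 + 1 + m + 1 - (j + d + 1 + 1) = m + 1 by omega,
      show j + d + 1 + 1 + m + 1 - (j + 1) = d + m + 2 by omega,
      show j + d + 1 + 1 + m + 1 - (j + d + 1) = m + 2 by omega,
      show j + d + 1 + 1 + m + 1 - (j + d + 1 + 2) = m by omega,
      show j + d + 1 + 1 - (j + 1) = d + 1 by omega,
      show j + d + 1 + 2 - (j + 1) = d + 2 by omega,
      show j + d + 1 - (j + 1) = d by omega,
      if_neg (by omega : ¬ j + d + 1 + 2 ≤ j + 1)]
    by_cases hd : d = 0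
    · subst hd
      rw [if_pos (by omega), show j + 1 - (j + 0 + 1) = 0 by omega,
        show 0 + m + 2 = m + 2 by omega, katzE_rec _ m, show j + 0 + 1 = j + 1 by omega]
      ring
    · rw [if_neg (by omega), katzE_rec _ m]
      ring

theorem katz_sum (n : ℕ) (g : ℕ → ℝ) (h0 : g 0 = 0) (hn : g (n + 1) = 0) (i : Fin n) :
    ∑ k : Fin n, pathAdj n i k * g (k.val + 1) = g i.val + g (i.val + 2) := by
  have h1 : ∀ k : Fin n, pathAdj n i k * g (k.val + 1)
      = (if k.val = i.val + 1 then g (i.val + 2) else 0)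
        + (if k.val + 1 = i.val then g i.val else 0) := by
    intro k
    unfold pathAdj
    by_cases ha : k.val = i.val + 1
    · rw [if_pos (by omega), if_pos ha, if_neg (by omega), ha]; simp
    · by_cases hb : k.val + 1 = i.val
      · rw [if_pos (by omega), if_neg ha, if_pos hb, hb]; simp
      · rw [if_neg (by omega), if_neg ha, if_neg hb]; simp
  simp_rw [h1]
  rw [Fin.sum_univ_eq_sum_range (fun k => (if k = i.val + 1 then g (i.val + 2) else 0)
        + (if k + 1 = i.val then g i.val else 0)) n, Finset.sum_add_distrib,
      Finset.sum_ite_eq', add_comm]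
  congr 1
  · rcases hi : i.val with _ | m
    · simp [h0]
    · have : m < n := by omega
      simp [this]
  · split_ifs with h
    · rfl
    · have : i.val + 1 = n := by
        have := i.isLt
        simp at h; omega
      rw [show i.val + 2 = n + 1 by omega, hn]

theorem katz_inv (α : ℝ) (n : ℕ) (hE : katzE (α ^ 2) (n + 1) ≠ 0) :
    ((1 : Matrix (Fin n) (Fin n) ℝ) - α • pathAdj n)⁻¹
      = Matrix.of fun i j => katzF α n (j.val + 1) (i.val + 1) / katzE (α ^ 2) (n + 1) := by
  apply Matrix.inv_eq_right_inv
  ext i j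
  rw [sub_mul, one_mul, smul_mul_assoc, Matrix.sub_apply, Matrix.smul_apply, Matrix.mul_apply]
  simp only [Matrix.of_apply]
  have hs := katz_sum n (fun k => katzF α n (j.val + 1) k / katzE (α ^ 2) (n + 1))
    (by simp [katzF, katzE])
    (by
      have := j.isLt
      simp only [katzF]
      rw [if_neg (by omega)]; simp [katzE]) i
  rw [hs, smul_eq_mul]
  have hr := katzF_rec α n j.val i.val (by omega) (by omega)
  rw [Matrix.one_apply]
  simp only [Fin.ext_iff]
  rw [← add_div, ← mul_div_assoc, ← sub_div, hr]
  split_ifs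
  · exact div_self hE
  · simp

theorem stmt16 (n : ℕ) (hn : 2 ≤ n) (α : ℝ) (hα0 : 0 < α) (hα1 : α < 1 / Real.sqrt 5)
    (i j i' j' : ℕ)
    (hi : 1 ≤ i) (hij : i < j) (hjn : j ≤ n)
    (hi' : 1 ≤ i') (hij' : i' < j') (hjn' : j' ≤ n)
    (hgt : j - i > j' - i') :
    (((1 : Matrix (Fin n) (Fin n) ℝ) - α • pathAdj n)⁻¹ - 1)
        ⟨i - 1, by omega⟩ ⟨j - 1, by omega⟩
      < (((1 : Matrix (Fin n) (Fin n) ℝ) - α • pathAdj n)⁻¹ - 1)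
          ⟨i' - 1, by omega⟩ ⟨j' - 1, by omega⟩ := by
  have h5 : 0 < Real.sqrt 5 := by positivity
  have hα5 : α ^ 2 * 5 < 1 := by
    have h : α * Real.sqrt 5 < 1 := by rwa [lt_div_iff₀ h5] at hα1
    have h2 : Real.sqrt 5 ^ 2 = 5 := Real.sq_sqrt (by norm_num)
    have h3 : 0 < α * Real.sqrt 5 := by positivity
    nlinarith
  have hα1' : α < 1 := by nlinarith
  obtain ⟨r, hr, hc, hrα⟩ : ∃ r : ℝ, 0 < r ∧ r * (1 - r) = α ^ 2 ∧ α < 2 * r - 1 := by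
    have hs : Real.sqrt (1 - 4 * α ^ 2) ^ 2 = 1 - 4 * α ^ 2 := Real.sq_sqrt (by nlinarith)
    have hs0 := Real.sqrt_nonneg (1 - 4 * α ^ 2)
    refine ⟨(1 + Real.sqrt (1 - 4 * α ^ 2)) / 2, by positivity, by nlinarith, ?_⟩
    have : α < Real.sqrt (1 - 4 * α ^ 2) := Real.lt_sqrt_of_sq_lt (by nlinarith)
    linarith
  have hc0 : 0 < α ^ 2 := by positivity
  have hg := katzE_growth (α ^ 2) r hr hc hc0
  have hchain : ∀ a e : ℕ, α ^ e * katzE (α ^ 2) (a + 1) ≤ katzE (α ^ 2) (a + e + 1) := by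
    intro a e
    induction e with
    | zero => simp
    | succ e ih =>
      have h1 := (hg (a + e + 1)).2.2
      have h2 := mul_le_mul_of_nonneg_left ih hα0.le
      have h3 : α * katzE (α ^ 2) (a + e + 1) ≤ r * katzE (α ^ 2) (a + e + 1) :=
        mul_le_mul_of_nonneg_right (by linarith) (hg (a + e)).2.1.le
      have h4 : α ^ (e + 1) * katzE (α ^ 2) (a + 1)
          = α * (α ^ e * katzE (α ^ 2) (a + 1)) := by ring
      rw [show a + (e + 1) + 1 = a + e + 1 + 1 by ring]
      linarith
  have key : ∀ p q : ℕ, α * (katzE (α ^ 2) (p + 1) * katzE (α ^ 2) (q + 1))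
      < katzE (α ^ 2) (p + q + 2) := by
    intro p q
    have h1 := katzE_add (α ^ 2) p (q + 1)
    rw [show p + (q + 1) + 1 = p + q + 2 by ring] at h1
    have h2 := katzE_rec (α ^ 2) p
    obtain ⟨_, hp, _⟩ := hg p
    obtain ⟨_, hq, _⟩ := hg q
    have hp2 := (hg (p + 1)).2.2
    have hq2 := (hg (q + 1)).2.2
    have h3 : katzE (α ^ 2) (p + q + 2)
        = katzE (α ^ 2) (p + 1) * katzE (α ^ 2) (q + 1 + 1)
          + (katzE (α ^ 2) (p + 1 + 1) - katzE (α ^ 2) (p + 1)) * katzE (α ^ 2) (q + 1) := by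
      rw [h1, show p + 1 + 1 = p + 2 by ring, h2]; ring
    rw [h3]
    have hpq := mul_pos hp hq
    have e1 := mul_le_mul_of_nonneg_left hq2 hp.le
    have e2 := mul_le_mul_of_nonneg_right hp2 hq.le
    have e3 := mul_lt_mul_of_pos_right hrα hpq
    linarith
  have hEn : 0 < katzE (α ^ 2) (n + 1) := (hg n).2.1
  rw [katz_inv α n hEn.ne', Matrix.sub_apply, Matrix.sub_apply, Matrix.one_apply_ne,
    Matrix.one_apply_ne, sub_zero, sub_zero]
  rotate_left
  · intro h; rw [Fin.ext_iff] at h; simp only at h; omega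
  · intro h; rw [Fin.ext_iff] at h; simp only at h; omega
  simp only [Matrix.of_apply]
  apply div_lt_div_of_pos_right _ hEn
  simp only [katzF]
  rw [if_pos (by omega), if_pos (by omega)]
  obtain ⟨p, rfl⟩ := Nat.exists_eq_add_of_le' hi
  obtain ⟨p', rfl⟩ := Nat.exists_eq_add_of_le' hi'
  obtain ⟨q, rfl⟩ := Nat.exists_eq_add_of_le hjn
  obtain ⟨q', hq'⟩ := Nat.exists_eq_add_of_le hjn'
  obtain ⟨d, rfl⟩ := Nat.exists_eq_add_of_lt hij
  obtain ⟨d', rfl⟩ := Nat.exists_eq_add_of_lt hij'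
  obtain ⟨e, rfl⟩ : ∃ e, d = d' + 1 + e := ⟨d - d' - 1, by omega⟩
  have hp'q' : p' + q' = p + q + 1 + e := by omega
  rw [show p + 1 + (d' + 1 + e) + 1 - 1 + 1 - (p + 1 - 1 + 1) = d' + 1 + e + 1 by omega,
    show p + 1 + (d' + 1 + e) + 1 + q + 1 - (p + 1 + (d' + 1 + e) + 1 - 1 + 1) = q + 1 by omega,
    show p' + 1 + d' + 1 - 1 + 1 - (p' + 1 - 1 + 1) = d' + 1 by omega,
    show p + 1 + (d' + 1 + e) + 1 + q + 1 - (p' + 1 + d' + 1 - 1 + 1) = q' + 1 by omega,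
    show p + 1 - 1 + 1 = p + 1 by omega, show p' + 1 - 1 + 1 = p' + 1 by omega]
  have k1 := key p q
  have k2 : katzE (α ^ 2) (p' + q' + 1)
      ≤ katzE (α ^ 2) (p' + 1) * katzE (α ^ 2) (q' + 1) := by
    rw [katzE_add]
    have := mul_nonneg hc0.le (mul_nonneg (hg p').1 (hg q').1)
    linarith
  have k3 := hchain (p + q + 1) e
  rw [show p + q + 1 + e = p' + q' by omega] at k3
  calc α ^ (d' + 1 + e + 1) * (katzE (α ^ 2) (p + 1) * katzE (α ^ 2) (q + 1))
      = α ^ (d' + 1 + e) * (α * (katzE (α ^ 2) (p + 1) * katzE (α ^ 2) (q + 1))) := by ring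
    _ < α ^ (d' + 1 + e) * katzE (α ^ 2) (p + q + 2) :=
        mul_lt_mul_of_pos_left k1 (pow_pos hα0 _)
    _ = α ^ (d' + 1) * (α ^ e * katzE (α ^ 2) (p + q + 1 + 1)) := by ring_nf
    _ ≤ α ^ (d' + 1) * (katzE (α ^ 2) (p' + 1) * katzE (α ^ 2) (q' + 1)) :=
        mul_le_mul_of_nonneg_left (k3.trans k2) (pow_pos hα0 _).le
end
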